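/- There do not exist real numbers μ₂, μ₃, μ₄ > 0 and signs σ₁, σ₂, σ₃, σ₄ ∈ {−1, 1} such that (μ₂ − 1)(μ₃ − 1)(μ₄ − 1)(μ₂ − μ₃)(μ₂ − μ₄)(μ₃ − μ₄) ≠ 0 and simultaneously μ₂³(1 + σ₁μ₃³) = σ₂μ₄³(1 − σ₁μ₃³), μ₂³(1 + σ₃μ₄³) = σ₄μ₃³(1 − σ₃μ₄³), and 1 + μ₂² = μ₃² + μ₄². -/

import Mathlib

/-!
Write `X, Y, Z` for the cubes of `μ₂, μ₃, μ₄`. If `σ₁ ≠ σ₂`, the equation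
`X (1 + σ₁ Y) = σ₂ Z (1 - σ₁ Y)` forces either `μ₃ > 1, μ₄ > μ₂` or `μ₃ < 1, μ₄ < μ₂`, and both are
incompatible with `1 + μ₂² = μ₃² + μ₄²` (`sign_eq_of_cubic`). Hence `σ₁ = σ₂`, and `σ₃ = σ₄` by the
symmetry exchanging `μ₃` and `μ₄`. In the remaining four sign cases a linear combination of the two
cubic equations factors: if `σ₁ = σ₃`, their difference is `(X + 1) (Y - Z) = 0`, so `μ₃ = μ₄`; if
`σ₁ ≠ σ₃`, their sum is `(X - 1) (Y + Z) = 0`, so `μ₂ = 1`. Both contradict distinctness.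
-/

/-- Comparing sizes on the two sides of one cubic equation, the condition on the sum of squares
leaves only equal signs. -/
lemma sign_eq_of_cubic {x y z s t : ℝ} (hx : 0 < x) (hy : 0 < y) (hz : 0 < z)
    (hs : s = -1 ∨ s = 1) (ht : t = -1 ∨ t = 1)
    (h : x ^ 3 * (1 + s * y ^ 3) = t * z ^ 3 * (1 - s * y ^ 3))
    (hsq : 1 + x ^ 2 = y ^ 2 + z ^ 2) : s = t := by
  have hX : 0 < x ^ 3 := by positivity
  have hY : 0 < y ^ 3 := by positivity
  have hZ : 0 < z ^ 3 := by positivity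
  have hXY := mul_pos hX hY
  rcases hs with rfl | rfl <;> rcases ht with rfl | rfl
  · rfl
  · -- `X (1 - Y) = Z (1 + Y)` gives `y < 1` and `z < x`.
    have hy1 : y < 1 := by
      by_contra! hc
      have : 1 ≤ y ^ 3 := one_le_pow₀ hc
      nlinarith [mul_pos hZ hY]
    have hzx : z < x := by
      by_contra! hc
      have : x ^ 3 ≤ z ^ 3 := by gcongr
      nlinarith
    nlinarith
  · -- `X (1 + Y) = Z (Y - 1)` gives `1 < y` and `x < z`.
    have hy1 : 1 < y := by
      by_contra! hc
      have : y ^ 3 ≤ 1 := pow_le_one₀ hy.le hc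
      nlinarith
    have hxz : x < z := by
      by_contra! hc
      have : z ^ 3 ≤ x ^ 3 := by gcongr
      nlinarith
    nlinarith
  · rfl


/-- The system `μ₂³(1 + σ₁μ₃³) = σ₂μ₄³(1 − σ₁μ₃³)`,
`μ₂³(1 + σ₃μ₄³) = σ₄μ₃³(1 − σ₃μ₄³)`, `1 + μ₂² = μ₃² + μ₄²` has no solution with
`μ₂, μ₃, μ₄ > 0`, `σᵢ = ±1`, and `μ₂, μ₃, μ₄, 1` pairwise distinct as encoded by
`(μ₂−1)(μ₃−1)(μ₄−1)(μ₂−μ₃)(μ₂−μ₄)(μ₃−μ₄) ≠ 0`. -/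
theorem no_solution_distinct_mass_system :
    ¬ ∃ (μ₂ μ₃ μ₄ σ₁ σ₂ σ₃ σ₄ : ℝ),
      0 < μ₂ ∧ 0 < μ₃ ∧ 0 < μ₄ ∧
      (σ₁ = -1 ∨ σ₁ = 1) ∧ (σ₂ = -1 ∨ σ₂ = 1) ∧
      (σ₃ = -1 ∨ σ₃ = 1) ∧ (σ₄ = -1 ∨ σ₄ = 1) ∧
      (μ₂ - 1) * (μ₃ - 1) * (μ₄ - 1) * (μ₂ - μ₃) * (μ₂ - μ₄) * (μ₃ - μ₄) ≠ 0 ∧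
      μ₂ ^ 3 * (1 + σ₁ * μ₃ ^ 3) = σ₂ * μ₄ ^ 3 * (1 - σ₁ * μ₃ ^ 3) ∧
      μ₂ ^ 3 * (1 + σ₃ * μ₄ ^ 3) = σ₄ * μ₃ ^ 3 * (1 - σ₃ * μ₄ ^ 3) ∧
      1 + μ₂ ^ 2 = μ₃ ^ 2 + μ₄ ^ 2 := by
  rintro ⟨x, y, z, s, t, u, v, hx, hy, hz, hs, ht, hu, hv, hne, h1, h2, hsq⟩
  obtain rfl := sign_eq_of_cubic hx hy hz hs ht h1 hsq
  obtain rfl := sign_eq_of_cubic hx hz hy hu hv h2 (by linarith)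
  have hX : 0 < x ^ 3 := by positivity
  have hY : 0 < y ^ 3 := by positivity
  have hZ : 0 < z ^ 3 := by positivity
  have key : x = 1 ∨ y = z := by
    by_cases hsu : s = u
    · subst hsu
      right
      have hfac : (x ^ 3 + 1) * (y ^ 3 - z ^ 3) = 0 := by
        rcases hs with rfl | rfl <;> linarith
      have hyz : y ^ 3 = z ^ 3 := by
        rcases mul_eq_zero.mp hfac with h | h <;> linarith
      exact (pow_left_inj₀ hy.le hz.le (by norm_num)).mp hyz
    · left
      have hfac : (x ^ 3 - 1) * (y ^ 3 + z ^ 3) = 0 := by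
        rcases hs with rfl | rfl <;> rcases hu with rfl | rfl <;>
          first | exact absurd rfl hsu | linarith
      have hx1 : x ^ 3 = 1 := by
        rcases mul_eq_zero.mp hfac with h | h <;> linarith
      exact (pow_eq_one_iff_of_nonneg hx.le (by norm_num)).mp hx1
  rcases key with rfl | rfl <;> simp at hne
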